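/- arXiv:1711.00889 — 5 statements merged into one kernel-verified Lean document; each statement's English description precedes it below -/
import Mathlib

section
/- For every measurable function D : Ω → ℝ with 0 < D(x) < 1 for all x, the GAN value satisfies f(D) ≤ f(D*); that is, ∫ log D dP + ∫ log(1 − D) dQ ≤ ∫ log(dP/d(P+Q)) dP + ∫ log(dQ/d(P+Q)) dQ, where the integrals are taken in the extended reals. -/
open MeasureTheory

lemma gibbs_aux (a d : ℝ) (ha : 0 ≤ a) (hd : 0 < d) :
    a * (-Real.log a) ≤ a * (-Real.log d) + (d - a) := by
  rcases ha.eq_or_lt with rfl | ha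
  · simpa using hd.le
  · have h := Real.log_le_sub_one_of_pos (div_pos hd ha)
    rw [Real.log_div hd.ne' ha.ne'] at h
    have h2 := mul_le_mul_of_nonneg_left h ha.le
    have h3 : a * (d / a - 1) = d - a := by field_simp
    linarith

lemma gibbs_ennreal (p q : ENNReal) (hpq : p + q = 1) (d : ℝ) (hd : d ∈ Set.Ioo (0 : ℝ) 1) :
    p * ENNReal.ofReal (-Real.log p.toReal) + q * ENNReal.ofReal (-Real.log q.toReal)
    ≤ p * ENNReal.ofReal (-Real.log d) + q * ENNReal.ofReal (-Real.log (1 - d)) := by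
  have hp : p ≠ ⊤ := by rintro rfl; simp at hpq
  have hq : q ≠ ⊤ := by rintro rfl; simp at hpq
  have hs : p.toReal + q.toReal = 1 := by
    rw [← ENNReal.toReal_add hp hq, hpq]; simp
  obtain ⟨hd0, hd1⟩ := hd
  have hp0 : 0 ≤ p.toReal := ENNReal.toReal_nonneg
  have hq0 : 0 ≤ q.toReal := ENNReal.toReal_nonneg
  have key : ∀ (r : ENNReal) (t : ℝ), r ≠ ⊤ →
      r * ENNReal.ofReal t = ENNReal.ofReal (r.toReal * t) := by
    intro r t hr
    rw [ENNReal.ofReal_mul ENNReal.toReal_nonneg, ENNReal.ofReal_toReal hr]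
  have n : ∀ a t : ℝ, 0 ≤ a → 0 ≤ t → t ≤ 1 → 0 ≤ a * (-Real.log t) := fun a t ha h0 h1 =>
    mul_nonneg ha (neg_nonneg.2 (Real.log_nonpos h0 h1))
  rw [key _ _ hp, key _ _ hq, key _ _ hp, key _ _ hq,
    ← ENNReal.ofReal_add (n _ _ hp0 hp0 (by linarith)) (n _ _ hq0 hq0 (by linarith)),
    ← ENNReal.ofReal_add (n _ _ hp0 hd0.le hd1.le) (n _ _ hq0 (by linarith) (by linarith))]
  apply ENNReal.ofReal_le_ofReal
  have h1 := gibbs_aux p.toReal d hp0 hd0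
  have h2 := gibbs_aux q.toReal (1 - d) hq0 (by linarith)
  linarith

/-- optimal discriminator, Lemma 1 of the paper.
For probability measures `P, Q` and any measurable `D : Ω → ℝ` with `0 < D x < 1` for all `x`,
the GAN value `f(D) = ∫ log D dP + ∫ log (1 - D) dQ` (an extended real, here encoded through
the negated nonnegative integrals, since all integrands `log D`, `log (1-D)`,
`log (dP/d(P+Q))`, `log (dQ/d(P+Q))` are (a.e.) nonpositive) satisfies `f(D) ≤ f(D*)` where
`D* = dP/d(P+Q)` and `1 - D* = dQ/d(P+Q)` a.e.  Negating turns this into the inequality below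
between `ℝ≥0∞`-valued integrals. -/
theorem gan_value_le_optimal {Ω : Type*} [MeasurableSpace Ω]
    (P Q : Measure Ω) [IsProbabilityMeasure P] [IsProbabilityMeasure Q]
    (D : Ω → ℝ) (hD : Measurable D) (hD01 : ∀ x, D x ∈ Set.Ioo (0 : ℝ) 1) :
    ∫⁻ x, ENNReal.ofReal (-Real.log ((P.rnDeriv (P + Q) x).toReal)) ∂P
      + ∫⁻ x, ENNReal.ofReal (-Real.log ((Q.rnDeriv (P + Q) x).toReal)) ∂Q
    ≤ ∫⁻ x, ENNReal.ofReal (-Real.log (D x)) ∂P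
      + ∫⁻ x, ENNReal.ofReal (-Real.log (1 - D x)) ∂Q := by
  have hP : P ≪ P + Q := Measure.AbsolutelyContinuous.rfl.add_right Q
  have hQ : Q ≪ P + Q := by
    rw [add_comm]; exact Measure.AbsolutelyContinuous.rfl.add_right P
  have hp := Measure.measurable_rnDeriv P (P + Q)
  have hq := Measure.measurable_rnDeriv Q (P + Q)
  have hsum : ∀ᵐ x ∂(P + Q), P.rnDeriv (P + Q) x + Q.rnDeriv (P + Q) x = 1 := by
    filter_upwards [Measure.rnDeriv_add P Q (P + Q), Measure.rnDeriv_self (P + Q)] with x h1 h2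
    rw [h2] at h1
    exact h1.symm
  rw [← lintegral_rnDeriv_mul hP (by fun_prop), ← lintegral_rnDeriv_mul hQ (by fun_prop),
    ← lintegral_rnDeriv_mul hP (by fun_prop), ← lintegral_rnDeriv_mul hQ (by fun_prop),
    ← lintegral_add_left (by fun_prop), ← lintegral_add_left (by fun_prop)]
  apply lintegral_mono_ae
  filter_upwards [hsum] with x hx
  exact gibbs_ennreal _ _ hx _ (hD01 x)
end

section
/- The value of the GAN objective at the optimal discriminator D* = dP/d(P+Q) satisfies the identity ∫ log(dP/d(P+Q)) dP + ∫ log(dQ/d(P+Q)) dQ = −log 4 + KL(P ∥ M) + KL(Q ∥ M), where M = (1/2)·(P + Q) is the midpoint measure. -/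
open MeasureTheory
open scoped ENNReal Classical

/-- The Kullback–Leibler divergence `KL(μ ∥ ν) = ∫ log (dμ/dν) dμ` (an extended real) when
`μ ≪ ν` (and this integral is finite, i.e. the log-likelihood ratio is integrable;
for probability measures the integral is `+∞` otherwise), and `+∞` when `¬ μ ≪ ν`. -/
noncomputable def klDiv {Ω : Type*} [MeasurableSpace Ω] (μ ν : Measure Ω) : EReal :=
  if μ ≪ ν ∧ Integrable (llr μ ν) μ then ((∫ x, llr μ ν x ∂μ : ℝ) : EReal) else ⊤

lemma aux_int {Ω : Type*} [MeasurableSpace Ω] (μ R : Measure Ω) [IsProbabilityMeasure μ]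
    [IsFiniteMeasure R] (h : μ ≤ R) : Integrable (llr μ R) μ := by
  have hac : μ ≪ R := Measure.absolutelyContinuous_of_le h
  rw [← integrable_rnDeriv_mul_log_iff hac]
  refine Integrable.of_bound (C := 1) (by fun_prop) ?_
  filter_upwards [Measure.rnDeriv_le_one_of_le h] with x hx
  have h1 : (μ.rnDeriv R x).toReal ≤ 1 := ENNReal.toReal_le_of_le_ofReal (by simp) (by simpa using hx)
  rcases (ENNReal.toReal_nonneg (a := μ.rnDeriv R x)).eq_or_lt with h0 | h0
  · simp [← h0]
  · have := Real.abs_log_mul_self_lt _ h0 h1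
    rw [mul_comm] at this
    exact this.le

lemma aux_lint {Ω : Type*} [MeasurableSpace Ω] (μ R : Measure Ω) [IsProbabilityMeasure μ]
    [IsFiniteMeasure R] (h : μ ≤ R) :
    0 ≤ ∫ x, -llr μ R x ∂μ ∧
    ∫⁻ x, ENNReal.ofReal (-Real.log ((μ.rnDeriv R x).toReal)) ∂μ
      = ENNReal.ofReal (∫ x, -llr μ R x ∂μ) := by
  have hac : μ ≪ R := Measure.absolutelyContinuous_of_le h
  have hnn : 0 ≤ᵐ[μ] fun x => -llr μ R x := by
    filter_upwards [hac.ae_le (Measure.rnDeriv_le_one_of_le h)] with x hx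
    have h1 : (μ.rnDeriv R x).toReal ≤ 1 :=
      ENNReal.toReal_le_of_le_ofReal (by simp) (by simpa using hx)
    have := Real.log_nonpos ENNReal.toReal_nonneg h1
    simp only [llr, Pi.zero_apply]
    linarith
  refine ⟨integral_nonneg_of_ae hnn, ?_⟩
  have hi : Integrable (fun x => -llr μ R x) μ := (aux_int μ R h).neg
  rw [ofReal_integral_eq_lintegral_ofReal hi hnn]
  rfl

lemma aux_kl {Ω : Type*} [MeasurableSpace Ω] (μ R : Measure Ω) [IsProbabilityMeasure μ]
    [IsFiniteMeasure R] (h : μ ≤ R) :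
    klDiv μ ((2 : ℝ≥0∞)⁻¹ • R) = ((Real.log 2 - ∫ x, -llr μ R x ∂μ : ℝ) : EReal) := by
  have hac : μ ≪ R := Measure.absolutelyContinuous_of_le h
  have hac2 : μ ≪ (2 : ℝ≥0∞)⁻¹ • R := hac.trans (Measure.absolutelyContinuous_smul (by simp))
  have he := llr_smul_right hac (2 : ℝ≥0∞)⁻¹ (by simp) (by simp)
  have he2 : llr μ ((2 : ℝ≥0∞)⁻¹ • R) =ᵐ[μ] fun x => llr μ R x + Real.log 2 := by
    filter_upwards [he] with x hx
    rw [hx]; simp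
  have hi := aux_int μ R h
  unfold klDiv
  rw [if_pos ⟨hac2, (integrable_congr he2).2 (hi.add (integrable_const _))⟩, integral_congr_ae he2,
    integral_add hi (integrable_const _), integral_neg]
  simp [add_comm]

/-- The value of the GAN objective at the optimal discriminator
`D* = dP/d(P+Q)` (with `1 - D* = dQ/d(P+Q)` a.e.) satisfies
`∫ log (dP/d(P+Q)) dP + ∫ log (dQ/d(P+Q)) dQ = -log 4 + KL(P ∥ M) + KL(Q ∥ M)`,
where `M = (1/2)·(P+Q)`.  The left-hand side (an extended real, with a.e. nonpositive
integrands) is encoded as minus the sum of the corresponding `ℝ≥0∞`-valued integrals. -/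
theorem gan_value_at_optimal_eq {Ω : Type*} [MeasurableSpace Ω]
    (P Q : Measure Ω) [IsProbabilityMeasure P] [IsProbabilityMeasure Q] :
    -(((∫⁻ x, ENNReal.ofReal (-Real.log ((P.rnDeriv (P + Q) x).toReal)) ∂P
        + ∫⁻ x, ENNReal.ofReal (-Real.log ((Q.rnDeriv (P + Q) x).toReal)) ∂Q : ℝ≥0∞)) : EReal)
      = ((-Real.log 4 : ℝ) : EReal)
        + klDiv P ((2 : ℝ≥0∞)⁻¹ • (P + Q)) + klDiv Q ((2 : ℝ≥0∞)⁻¹ • (P + Q)) := by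
  have hP : P ≤ P + Q := Measure.le_add_right le_rfl
  have hQ : Q ≤ P + Q := Measure.le_add_left le_rfl
  obtain ⟨p0, p1⟩ := aux_lint P (P + Q) hP
  obtain ⟨q0, q1⟩ := aux_lint Q (P + Q) hQ
  rw [p1, q1, aux_kl P _ hP, aux_kl Q _ hQ, ← ENNReal.ofReal_add p0 q0,
    EReal.coe_ennreal_ofReal, max_eq_left (add_nonneg p0 q0)]
  have h4 : Real.log 4 = 2 * Real.log 2 := by
    rw [show (4 : ℝ) = 2 ^ 2 by norm_num, Real.log_pow]; norm_num
  rw [h4]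
  norm_cast
  ring
end

section
/- Let g(P, Q) denote the supremum over all measurable D : Ω → ℝ with 0 < D < 1 of the GAN value f(D) = ∫ log D dP + ∫ log(1 − D) dQ. Then g(P, Q) ≥ −log 4 for all probability measures P and Q, and g(P, Q) = −log 4 if and only if P = Q. Moreover, when P = Q, the optimal discriminator satisfies D* = dP/d(P+Q) = 1/2 almost everywhere with respect to P + Q. -/
open MeasureTheory
open scoped ENNReal

theorem gan_aux_le {Ω : Type*} [MeasurableSpace Ω]
    (P Q : Measure Ω) [IsProbabilityMeasure P] [IsProbabilityMeasure Q]
    (h : ∀ D : Ω → ℝ, Measurable D → (∀ x, D x ∈ Set.Ioo (0 : ℝ) 1) →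
      ENNReal.ofReal (Real.log 4) ≤ ∫⁻ x, ENNReal.ofReal (-Real.log (D x)) ∂P
          + ∫⁻ x, ENNReal.ofReal (-Real.log (1 - D x)) ∂Q)
    (A : Set Ω) (hA : MeasurableSet A) : P A ≤ Q A := by
  classical
  have key : ∀ t : ℝ, 0 < t → t < 1 →
      0 ≤ P.real A * (-Real.log (1 + t)) + Q.real A * (-Real.log (1 - t)) := by
    intro t h0 h1
    have hl4 : Real.log 4 = 2 * Real.log 2 := by
      rw [show (4 : ℝ) = 2 ^ 2 by norm_num, Real.log_pow]; norm_num
    have hl2 : 0 < Real.log 2 := Real.log_pos (by norm_num)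
    have hint : ∀ (μ : Measure Ω) [IsProbabilityMeasure μ] (a : ℝ), 0 ≤ a → ∀ f : Ω → ℝ,
        (∀ x ∈ A, f x = a) → (∀ x ∈ Aᶜ, f x = Real.log 2) →
        ∫⁻ x, ENNReal.ofReal (f x) ∂μ
          = ENNReal.ofReal (μ.real A * a + (1 - μ.real A) * Real.log 2) := by
      intro μ _ a ha f hf hf'
      rw [← lintegral_add_compl _ hA,
        setLIntegral_congr_fun (g := fun _ => ENNReal.ofReal a) hA
          (fun x hx => by simp only [hf x hx]),
        setLIntegral_congr_fun (g := fun _ => ENNReal.ofReal (Real.log 2)) hA.compl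
          (fun x hx => by simp only [hf' x hx]), setLIntegral_const, setLIntegral_const,
        ← probReal_compl_eq_one_sub hA,
        ENNReal.ofReal_add (by positivity) (by positivity),
        ENNReal.ofReal_mul (by positivity), ENNReal.ofReal_mul (by positivity),
        ofReal_measureReal, ofReal_measureReal, mul_comm, mul_comm (ENNReal.ofReal (Real.log 2))]
    have e1 : Real.log ((1 + t) / 2) = Real.log (1 + t) - Real.log 2 :=
      Real.log_div (by linarith) (by norm_num)
    have e2 : Real.log ((1 - t) / 2) = Real.log (1 - t) - Real.log 2 :=
      Real.log_div (by linarith) (by norm_num)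
    have n1 : Real.log ((1 + t) / 2) ≤ 0 := Real.log_nonpos (by linarith) (by linarith)
    have n2 : Real.log ((1 - t) / 2) ≤ 0 := Real.log_nonpos (by linarith) (by linarith)
    have := h (fun x => if x ∈ A then (1 + t) / 2 else 1 / 2)
      (Measurable.ite hA measurable_const measurable_const)
      (fun x => by
        split_ifs
        · constructor <;> linarith
        · constructor <;> norm_num)
    have hhalf : Real.log (1 / 2) = - Real.log 2 := by rw [one_div, Real.log_inv]
    rw [hint P (-Real.log ((1 + t) / 2)) (by linarith) _
        (fun x hx => by simp only [if_pos hx])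
        (fun x hx => by simp only [if_neg (show x ∉ A from hx), hhalf, neg_neg]),
      hint Q (-Real.log ((1 - t) / 2)) (by linarith) _
        (fun x hx => by
          simp only [if_pos hx]; rw [show 1 - (1 + t) / 2 = (1 - t) / 2 by ring])
        (fun x hx => by
          simp only [if_neg (show x ∉ A from hx)]
          rw [show (1 : ℝ) - 1 / 2 = 1 / 2 by norm_num, hhalf, neg_neg])] at this
    have p1 : P.real A ≤ 1 := measureReal_le_one
    have q1 : Q.real A ≤ 1 := measureReal_le_one
    have pn : 0 ≤ P.real A := measureReal_nonneg
    have qn : 0 ≤ Q.real A := measureReal_nonneg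
    have w1 : 0 ≤ P.real A * (-Real.log ((1 + t) / 2)) + (1 - P.real A) * Real.log 2 :=
      add_nonneg (mul_nonneg pn (by linarith)) (mul_nonneg (by linarith) hl2.le)
    have w2 : 0 ≤ Q.real A * (-Real.log ((1 - t) / 2)) + (1 - Q.real A) * Real.log 2 :=
      add_nonneg (mul_nonneg qn (by linarith)) (mul_nonneg (by linarith) hl2.le)
    rw [← ENNReal.ofReal_add w1 w2, ENNReal.ofReal_le_ofReal_iff (by linarith), e1, e2, hl4] at this
    nlinarith
  have p1 : P.real A ≤ 1 := measureReal_le_one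
  have q1 : Q.real A ≤ 1 := measureReal_le_one
  have pn : 0 ≤ P.real A := measureReal_nonneg
  have qn : 0 ≤ Q.real A := measureReal_nonneg
  rw [← ENNReal.toReal_le_toReal (measure_ne_top _ _) (measure_ne_top _ _)]
  change P.real A ≤ Q.real A
  generalize P.real A = p at *
  generalize Q.real A = q at *
  by_contra! hlt
  obtain ⟨t, ht⟩ : ∃ t, t = (p - q) / 4 := ⟨_, rfl⟩
  have h0 : 0 < t := by linarith
  have h1 : t < 1 := by linarith
  have k := key t h0 h1
  have l1 := Real.one_sub_inv_le_log_of_pos (show 0 < 1 + t by linarith)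
  have l2 := Real.one_sub_inv_le_log_of_pos (show 0 < 1 - t by linarith)
  have f1 : 1 - (1 + t)⁻¹ = t / (1 + t) := by
    have : 1 + t ≠ 0 := by linarith
    field_simp; ring
  have f2 : 1 - (1 - t)⁻¹ = - (t / (1 - t)) := by
    have : 1 - t ≠ 0 := by linarith
    field_simp; ring
  rw [f1] at l1
  rw [f2] at l2
  have m1 := mul_le_mul_of_nonneg_left l1 pn
  have m2 := mul_le_mul_of_nonneg_left l2 qn
  have m3 : p * t / (1 + t) ≤ q * t / (1 - t) := by
    rw [mul_div_assoc, mul_div_assoc]; linarith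
  rw [div_le_div_iff₀ (by linarith) (by linarith)] at m3
  have m4 : p * (1 - t) ≤ q * (1 + t) := by
    by_contra! hh
    nlinarith
  nlinarith

/-- Lemma 2 of the paper.  Let
`g(P,Q) = sup { f(D) : D measurable, 0 < D < 1 }` where
`f(D) = ∫ log D dP + ∫ log (1-D) dQ` is the GAN value (an extended real; since the
integrands are nonpositive, `f(D)` is encoded as minus the sum of the `ℝ≥0∞`-valued
integrals of `-log D` and `-log (1-D)`).  Then `g(P,Q) ≥ -log 4`, with equality iff
`P = Q`; moreover when `P = Q` the optimal discriminator `D* = dP/d(P+Q)` equals `1/2`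
`(P+Q)`-almost everywhere. -/
theorem gan_sup_ge_neg_log_four {Ω : Type*} [MeasurableSpace Ω]
    (P Q : Measure Ω) [IsProbabilityMeasure P] [IsProbabilityMeasure Q] :
    let g : EReal := ⨆ (D : Ω → ℝ) (_ : Measurable D) (_ : ∀ x, D x ∈ Set.Ioo (0 : ℝ) 1),
      -(((∫⁻ x, ENNReal.ofReal (-Real.log (D x)) ∂P
          + ∫⁻ x, ENNReal.ofReal (-Real.log (1 - D x)) ∂Q : ℝ≥0∞)) : EReal)
    ((-Real.log 4 : ℝ) : EReal) ≤ g ∧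
      (g = ((-Real.log 4 : ℝ) : EReal) ↔ P = Q) ∧
      (P = Q → ∀ᵐ x ∂(P + Q), P.rnDeriv (P + Q) x = 1 / 2) := by
  intro g
  have hl4 : Real.log 4 = 2 * Real.log 2 := by
    rw [show (4 : ℝ) = 2 ^ 2 by norm_num, Real.log_pow]; norm_num
  have hl2 : 0 < Real.log 2 := Real.log_pos (by norm_num)
  have hcoe : ((-Real.log 4 : ℝ) : EReal) = -((ENNReal.ofReal (Real.log 4) : ℝ≥0∞) : EReal) := by
    rw [EReal.coe_ennreal_ofReal, max_eq_left (by linarith), EReal.coe_neg]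
  have hge : ((-Real.log 4 : ℝ) : EReal) ≤ g := by
    refine le_iSup_of_le (fun _ => 1 / 2) (le_iSup_of_le measurable_const
      (le_iSup_of_le (fun x => by constructor <;> norm_num) ?_))
    beta_reduce
    rw [hcoe, show (1 : ℝ) - 1 / 2 = 1 / 2 by norm_num,
      show Real.log (1 / 2) = - Real.log 2 by rw [one_div, Real.log_inv], neg_neg,
      lintegral_const, lintegral_const, measure_univ, measure_univ, mul_one,
      ← ENNReal.ofReal_add hl2.le hl2.le, hl4, two_mul]
  have hiff : g ≤ ((-Real.log 4 : ℝ) : EReal) ↔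
      ∀ D : Ω → ℝ, Measurable D → (∀ x, D x ∈ Set.Ioo (0 : ℝ) 1) →
      ENNReal.ofReal (Real.log 4) ≤ ∫⁻ x, ENNReal.ofReal (-Real.log (D x)) ∂P
          + ∫⁻ x, ENNReal.ofReal (-Real.log (1 - D x)) ∂Q := by
    simp only [g, iSup_le_iff, hcoe, EReal.neg_le_neg_iff, EReal.coe_ennreal_le_coe_ennreal_iff]
  refine ⟨hge, ⟨fun h => ?_, fun h => le_antisymm (hiff.2 ?_) hge⟩, fun h => ?_⟩
  · have hle := gan_aux_le P Q (hiff.1 h.le)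
    ext A hA
    refine le_antisymm (hle A hA) ?_
    have hc := hle Aᶜ hA.compl
    rw [prob_compl_eq_one_sub hA, prob_compl_eq_one_sub hA] at hc
    exact (ENNReal.sub_le_sub_iff_left prob_le_one ENNReal.one_ne_top).1 hc
  · subst h
    intro D hD hD1
    rw [← lintegral_add_left (by fun_prop)]
    calc ENNReal.ofReal (Real.log 4) = ∫⁻ _, ENNReal.ofReal (Real.log 4) ∂P := by simp
      _ ≤ _ := lintegral_mono fun x => by
        obtain ⟨h0, h1⟩ := hD1 x
        have a1 := Real.log_nonpos h0.le h1.le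
        have a2 := Real.log_nonpos (show 0 ≤ 1 - D x by linarith) (by linarith)
        rw [← ENNReal.ofReal_add (by linarith) (by linarith)]
        apply ENNReal.ofReal_le_ofReal
        have a3 : Real.log (D x * (1 - D x)) ≤ Real.log (4⁻¹) :=
          Real.log_le_log (mul_pos h0 (by linarith)) (by nlinarith [sq_nonneg (D x - 1 / 2)])
        rw [Real.log_mul h0.ne' (by linarith), Real.log_inv] at a3
        linarith
  · subst h
    have h2 : P = (2⁻¹ : ℝ≥0∞) • (P + P) := by
      rw [← two_smul ℝ≥0∞ P, smul_smul, ENNReal.inv_mul_cancel (by norm_num) (by norm_num), one_smul]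
    have h3 := Measure.rnDeriv_smul_left_of_ne_top (P + P) (P + P) (r := (2⁻¹ : ℝ≥0∞)) (by simp)
    rw [← h2] at h3
    filter_upwards [h3, Measure.rnDeriv_self (P + P)] with x hx hx'
    rw [hx, Pi.smul_apply, hx', smul_eq_mul, mul_one, one_div]
end

section
/- For all choices of the inference kernel I and generator kernel G, the supremum over measurable discriminators D : X × Z → (0,1) of L_xz(D) = ∫ log D dπ_i + ∫ log(1 − D) dπ_g is at least −log 4, and it equals −log 4 if and only if π_i = π_g, i.e., if and only if the inference joint p(x)·p_i(z|x) equals the generator joint p(z)·p_g(x|z). At that point the optimal discriminator dπ_i/d(π_i + π_g) equals 1/2 (π_i + π_g)-almost everywhere. -/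
open MeasureTheory ProbabilityTheory
open scoped ENNReal ProbabilityTheory

open Classical in
lemma aux_lint_s6 {α : Type*} [MeasurableSpace α] (μ : Measure α) [IsProbabilityMeasure μ]
    (A : Set α) (hA : MeasurableSet A) (u v : ℝ) (hu : 0 ≤ u) (hv : 0 ≤ v) :
    ∫⁻ p, ENNReal.ofReal (if p ∈ A then u else v) ∂μ
      = ENNReal.ofReal (u * μ.real A + v * (1 - μ.real A)) := by
  rw [← lintegral_add_compl _ hA]
  rw [setLIntegral_congr_fun (g := fun _ => ENNReal.ofReal u) hA (fun p hp => by simp [hp])]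
  rw [setLIntegral_congr_fun (g := fun _ => ENNReal.ofReal v) hA.compl
    (fun p hp => by simp [show p ∉ A from hp])]
  have h1 : μ.real Aᶜ = 1 - μ.real A := by
    rw [measureReal_compl hA]; simp
  rw [setLIntegral_const, setLIntegral_const, ← h1, ENNReal.ofReal_add (by positivity)
    (by positivity), ENNReal.ofReal_mul hu, ENNReal.ofReal_mul hv]
  simp [Measure.real]

lemma aux_log4 : Real.log 4 = 2 * Real.log 2 := by
  rw [show (4 : ℝ) = 2 ^ 2 by norm_num, Real.log_pow]; norm_num

lemma aux_low (d : ℝ) (h0 : 0 < d) (h1 : d < 1) :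
    Real.log 4 ≤ -Real.log d + -Real.log (1 - d) := by
  have h := Real.log_le_log (x := d * (1 - d) * 4) (y := 1)
    (by have : 0 < 1 - d := by linarith
        positivity) (by nlinarith [sq_nonneg (2 * d - 1)])
  rw [Real.log_mul (mul_ne_zero h0.ne' (by linarith)) (by norm_num),
    Real.log_mul h0.ne' (by linarith), Real.log_one] at h
  linarith

lemma aux_real (a b : ℝ) (ha1 : a ≤ 1) (hb1 : b ≤ 1)
    (h : ∀ s : ℝ, 0 < s → s < 1 → a * Real.log (1 + s) + b * Real.log (1 - s) ≤ 0)
    (ha : 0 ≤ a) (hb : 0 ≤ b) : a ≤ b := by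
  refine le_of_forall_pos_le_add fun e he => ?_
  obtain ⟨s, hs0, hs⟩ := exists_between (show 0 < min 1 (e / 2) by positivity)
  have hs1 : s < 1 := hs.trans_le (min_le_left _ _)
  have hs2 : s < e / 2 := hs.trans_le (min_le_right _ _)
  have h2 := Real.one_sub_inv_le_log_of_pos (x := 1 + s) (by linarith)
  have h3 := Real.one_sub_inv_le_log_of_pos (x := 1 - s) (by linarith)
  have h4 := h s hs0 hs1
  have h5 : a * (1 - (1 + s)⁻¹) + b * (1 - (1 - s)⁻¹) ≤ 0 :=
    (add_le_add (mul_le_mul_of_nonneg_left h2 ha) (mul_le_mul_of_nonneg_left h3 hb)).trans h4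
  have e1 : a * (1 - (1 + s)⁻¹) + b * (1 - (1 - s)⁻¹)
      = s * (a * (1 - s) - b * (1 + s)) / ((1 + s) * (1 - s)) := by
    have : 1 + s ≠ 0 := by linarith
    have : 1 - s ≠ 0 := by linarith
    field_simp
    ring
  have hp : 0 < (1 + s) * (1 - s) := mul_pos (by linarith) (by linarith)
  rw [e1, div_le_iff₀ hp, zero_mul] at h5
  have h6 : a * (1 - s) - b * (1 + s) ≤ 0 := by
    by_contra hc
    push Not at hc
    linarith [mul_pos hs0 hc]
  nlinarith

lemma aux_rn {α : Type*} [MeasurableSpace α] (μ : Measure α) [IsProbabilityMeasure μ] :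
    ∀ᵐ p ∂(μ + μ), μ.rnDeriv (μ + μ) p = 1 / 2 := by
  have h : (μ + μ).withDensity (fun _ => (1 / 2 : ℝ≥0∞)) = μ := by
    rw [withDensity_const, ← two_smul ℝ≥0∞ μ, smul_smul]
    rw [ENNReal.div_mul_cancel (by norm_num) (by norm_num), one_smul]
  have := Measure.rnDeriv_withDensity (μ + μ) (f := fun _ => (1 / 2 : ℝ≥0∞)) measurable_const
  rw [h] at this
  exact this

open Classical in
lemma aux_main {α : Type*} [MeasurableSpace α] (μ ν : Measure α) [IsProbabilityMeasure μ]
    [IsProbabilityMeasure ν] (g : EReal)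
    (hg : g = ⨆ (D : α → ℝ) (_ : Measurable D)
        (_ : ∀ p, D p ∈ Set.Ioo (0 : ℝ) 1),
      -(((∫⁻ p, ENNReal.ofReal (-Real.log (D p)) ∂μ
          + ∫⁻ p, ENNReal.ofReal (-Real.log (1 - D p)) ∂ν : ℝ≥0∞)) : EReal)) :
    ((-Real.log 4 : ℝ) : EReal) ≤ g ∧
      (g = ((-Real.log 4 : ℝ) : EReal) ↔ μ = ν) ∧
      (μ = ν → ∀ᵐ p ∂(μ + ν), μ.rnDeriv (μ + ν) p = 1 / 2) := by
  have key : ∀ A : Set α, MeasurableSet A → ∀ s : ℝ, 0 ≤ s → s < 1 →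
      ((μ.real A * Real.log (1 + s) + ν.real A * Real.log (1 - s) - Real.log 4 : ℝ) : EReal)
        ≤ g := by
    intro A hA s hs0 hs1
    rw [hg]
    refine le_iSup₂_of_le (fun p => if p ∈ A then (1 + s) / 2 else 1 / 2)
      (Measurable.ite hA measurable_const measurable_const) (le_iSup_of_le ?_ ?_)
    · intro p
      dsimp only
      split_ifs
      · constructor <;> linarith
      · constructor <;> norm_num
    have e1 : ∀ p, -Real.log (if p ∈ A then (1 + s) / 2 else 1 / 2)
        = if p ∈ A then Real.log 2 - Real.log (1 + s) else Real.log 2 := by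
      intro p
      split_ifs
      · rw [Real.log_div (by linarith) (by norm_num)]; ring
      · simp
    have e2 : ∀ p, -Real.log (1 - (if p ∈ A then (1 + s) / 2 else 1 / 2))
        = if p ∈ A then Real.log 2 - Real.log (1 - s) else Real.log 2 := by
      intro p
      split_ifs
      · rw [show 1 - (1 + s) / 2 = (1 - s) / 2 by ring,
          Real.log_div (by linarith) (by norm_num)]; ring
      · rw [show (1 : ℝ) - 1 / 2 = 2⁻¹ by norm_num, Real.log_inv, neg_neg]
    have l2 : 0 ≤ Real.log 2 := Real.log_nonneg (by norm_num)
    have u1 : 0 ≤ Real.log 2 - Real.log (1 + s) :=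
      sub_nonneg.2 (Real.log_le_log (by linarith) (by linarith))
    have u2 : 0 ≤ Real.log 2 - Real.log (1 - s) :=
      sub_nonneg.2 (Real.log_le_log (by linarith) (by linarith))
    have m1 : 0 ≤ 1 - μ.real A := sub_nonneg.2 measureReal_le_one
    have m2 : 0 ≤ 1 - ν.real A := sub_nonneg.2 measureReal_le_one
    simp only [e1, e2]
    rw [aux_lint_s6 μ A hA _ _ u1 l2, aux_lint_s6 ν A hA _ _ u2 l2,
      ← ENNReal.ofReal_add (by positivity) (by positivity),
      EReal.coe_ennreal_ofReal, max_eq_left (by positivity), ← EReal.coe_neg,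
      EReal.coe_le_coe_iff, aux_log4]
    apply le_of_eq
    ring
  have hlow : ((-Real.log 4 : ℝ) : EReal) ≤ g := by
    simpa using key ∅ MeasurableSet.empty 0 le_rfl one_pos
  refine ⟨hlow, ⟨fun h => ?_, fun h => ?_⟩, ?_⟩
  · have hle : μ ≤ ν := by
      rw [Measure.le_iff]
      intro A hA
      have : μ.real A ≤ ν.real A := by
        refine aux_real _ _ measureReal_le_one measureReal_le_one (fun s h0 h1 => ?_)
          measureReal_nonneg measureReal_nonneg
        have := key A hA s h0.le h1
        rw [h, EReal.coe_le_coe_iff] at this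
        linarith
      rwa [Measure.real, Measure.real,
        ENNReal.toReal_le_toReal (measure_ne_top _ _) (measure_ne_top _ _)] at this
    exact Measure.eq_of_le_of_measure_univ_eq hle (by simp)
  · subst h
    refine le_antisymm ?_ hlow
    rw [hg]
    refine iSup_le fun D => iSup_le fun hD => iSup_le fun hD1 => ?_
    have l4 : 0 ≤ Real.log 4 := Real.log_nonneg (by norm_num)
    have : ENNReal.ofReal (Real.log 4) ≤ ∫⁻ p, ENNReal.ofReal (-Real.log (D p)) ∂μ
          + ∫⁻ p, ENNReal.ofReal (-Real.log (1 - D p)) ∂μ := by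
      rw [← lintegral_add_left (by fun_prop)]
      calc ENNReal.ofReal (Real.log 4) = ∫⁻ _, ENNReal.ofReal (Real.log 4) ∂μ := by simp
        _ ≤ _ := lintegral_mono fun p =>
          (ENNReal.ofReal_le_ofReal (aux_low _ (hD1 p).1 (hD1 p).2)).trans
            ENNReal.ofReal_add_le
    rw [EReal.coe_neg, EReal.neg_le_neg_iff]
    have h2 := EReal.coe_ennreal_le_coe_ennreal_iff.2 this
    rwa [EReal.coe_ennreal_ofReal, max_eq_left l4] at h2
  · rintro rfl
    exact aux_rn μ

/-- Theorem 1 of the paper, the adversarial game `L_xz`.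
For any Markov kernels `I : X → Z` (inference) and `G : Y × Z → X` (generator), with
inference joint `πi = P_X ⊗ₘ I` and generator joint `πg` the pushforward of
`(p_Y × p_Z) ⊗ₘ G` under `((y,z),x) ↦ (x,z)`, the supremum over measurable
discriminators `D : X × Z → (0,1)` of
`L_xz(D) = ∫ log D dπi + ∫ log (1 - D) dπg` (extended-real valued; encoded as minus the
sum of the `ℝ≥0∞`-valued integrals of the nonnegative functions `-log D`, `-log (1-D)`)
is at least `-log 4`, with equality iff `πi = πg`; and at that point the optimal
discriminator `dπi/d(πi + πg)` equals `1/2` `(πi + πg)`-a.e. -/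
theorem sgan_game_xz {X Y Z : Type*}
    [MeasurableSpace X] [MeasurableSpace Y] [MeasurableSpace Z]
    (P_X : Measure X) [IsProbabilityMeasure P_X]
    (pY : Measure Y) [IsProbabilityMeasure pY]
    (pZ : Measure Z) [IsProbabilityMeasure pZ]
    (I : Kernel X Z) [IsMarkovKernel I]
    (G : Kernel (Y × Z) X) [IsMarkovKernel G] :
    let πi : Measure (X × Z) := P_X ⊗ₘ I
    let πg : Measure (X × Z) := ((pY.prod pZ) ⊗ₘ G).map (fun q => (q.2, q.1.2))
    let g : EReal := ⨆ (D : X × Z → ℝ) (_ : Measurable D)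
        (_ : ∀ p, D p ∈ Set.Ioo (0 : ℝ) 1),
      -(((∫⁻ p, ENNReal.ofReal (-Real.log (D p)) ∂πi
          + ∫⁻ p, ENNReal.ofReal (-Real.log (1 - D p)) ∂πg : ℝ≥0∞)) : EReal)
    ((-Real.log 4 : ℝ) : EReal) ≤ g ∧
      (g = ((-Real.log 4 : ℝ) : EReal) ↔ πi = πg) ∧
      (πi = πg → ∀ᵐ p ∂(πi + πg), πi.rnDeriv (πi + πg) p = 1 / 2) := by
  intro πi πg g
  have hm : Measurable (fun q : (Y × Z) × X => (q.2, q.1.2)) := by fun_prop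
  have : IsProbabilityMeasure πg := Measure.isProbabilityMeasure_map hm.aemeasurable
  have : IsProbabilityMeasure πi := by dsimp only [πi]; infer_instance
  exact aux_main πi πg g rfl
end

section
/- Let P be a probability measure on X with density p with respect to λ_X, let κ be a Markov kernel from X to Z with density k with respect to λ_Z, and let ρ be a probability measure on X × Z with density r with respect to λ_X ⊗ λ_Z such that ρ ≪ P ⊗ₘ κ. If the quantities −∫ log k(x, z) dρ(x, z), KL(ρ ∥ P ⊗ₘ κ) and ∫ log( r(x, z) / p(x) ) dρ(x, z) are all finite, then −∫ log k(x, z) dρ(x, z) = KL(ρ ∥ P ⊗ₘ κ) − ∫ log( r(x, z) / p(x) ) dρ(x, z). -/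
open MeasureTheory ProbabilityTheory
open scoped ENNReal NNReal ProbabilityTheory Classical

/-- decomposition of the latent reconstruction loss, key identity in the
proof of Theorem 3 of the paper.  Let `P = p • λ_X` be a probability measure on `X`,
`κ` a Markov kernel from `X` to `Z` with density `k` w.r.t. `λ_Z`, and
`ρ = r • (λ_X ⊗ λ_Z)` a probability measure on `X × Z` with `ρ ≪ P ⊗ₘ κ`.  If
`-∫ log k dρ`, `KL(ρ ∥ P ⊗ₘ κ)` and `∫ log (r/(p ∘ fst)) dρ` are all finite, then
`-∫ log k dρ = KL(ρ ∥ P ⊗ₘ κ) - ∫ log (r(x,z)/p(x)) dρ(x,z)`. -/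
theorem negLog_kernel_density_eq_klDiv_sub {X Z : Type*}
    [MeasurableSpace X] [MeasurableSpace Z]
    (lamX : Measure X) [SigmaFinite lamX] (lamZ : Measure Z) [SigmaFinite lamZ]
    (p : X → ℝ≥0) (hp : Measurable p)
    (P : Measure X) [IsProbabilityMeasure P]
    (hP : P = lamX.withDensity fun x => (p x : ℝ≥0∞))
    (κ : Kernel X Z) [IsMarkovKernel κ]
    (k : X × Z → ℝ≥0) (hk : Measurable k)
    (hκ : ∀ x, κ x = lamZ.withDensity fun z => (k (x, z) : ℝ≥0∞))
    (r : X × Z → ℝ≥0) (hr : Measurable r)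
    (ρ : Measure (X × Z)) [IsProbabilityMeasure ρ]
    (hρ : ρ = (lamX.prod lamZ).withDensity fun q => (r q : ℝ≥0∞))
    (hac : ρ ≪ P ⊗ₘ κ)
    (h1 : Integrable (fun q => Real.log (k q : ℝ)) ρ)
    (h2 : klDiv ρ (P ⊗ₘ κ) ≠ ⊤)
    (h3 : Integrable (fun q => Real.log ((r q : ℝ) / (p q.1 : ℝ))) ρ) :
    -∫ q, Real.log (k q : ℝ) ∂ρ
      = (klDiv ρ (P ⊗ₘ κ)).toReal - ∫ q, Real.log ((r q : ℝ) / (p q.1 : ℝ)) ∂ρ := by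
  have hQ : P ⊗ₘ κ = (lamX.prod lamZ).withDensity
      fun q => (p q.1 : ℝ≥0∞) * (k q : ℝ≥0∞) := by
    ext s hs
    have hm : Measurable fun q : X × Z => (p q.1 : ℝ≥0∞) * (k q : ℝ≥0∞) := by fun_prop
    have hκs : Measurable fun x => κ x (Prod.mk x ⁻¹' s) :=
      Kernel.measurable_kernel_prodMk_left hs
    rw [Measure.compProd_apply hs, withDensity_apply _ hs, ← lintegral_indicator hs,
      lintegral_prod _ (hm.indicator hs).aemeasurable]
    conv_lhs => rw [hP]
    rw [lintegral_withDensity_eq_lintegral_mul _ (by fun_prop) hκs]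
    refine lintegral_congr fun x => ?_
    have hsx : MeasurableSet (Prod.mk x ⁻¹' s) := measurable_prodMk_left hs
    have hkx : Measurable fun z => (k (x, z) : ℝ≥0∞) := by fun_prop
    simp only [Pi.mul_apply]
    rw [hκ x, withDensity_apply _ hsx, ← lintegral_indicator hsx,
      ← lintegral_const_mul _ (hkx.indicator hsx)]
    refine lintegral_congr fun z => ?_
    by_cases hz : (x, z) ∈ s
    · simp [Set.indicator, hz]
    · simp [Set.indicator, hz]
  have hρl : ρ ≪ lamX.prod lamZ := hρ ▸ withDensity_absolutelyContinuous _ _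
  have e1 := hρl.ae_le (Measure.rnDeriv_mul_rnDeriv (κ := lamX.prod lamZ) hac)
  have e2 : ρ.rnDeriv (lamX.prod lamZ) =ᵐ[ρ] fun q => (r q : ℝ≥0∞) := by
    refine hρl.ae_le ?_
    rw [hρ]
    exact Measure.rnDeriv_withDensity _ (by fun_prop)
  have e3 : (P ⊗ₘ κ).rnDeriv (lamX.prod lamZ)
      =ᵐ[ρ] fun q => (p q.1 : ℝ≥0∞) * (k q : ℝ≥0∞) := by
    refine hρl.ae_le ?_
    rw [hQ]
    exact Measure.rnDeriv_withDensity _ (by fun_prop)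
  have e4 : ∀ᵐ q ∂ρ, r q ≠ 0 := by
    rw [hρ, ae_withDensity_iff (by fun_prop)]
    exact Filter.Eventually.of_forall fun q hq h => hq (by simp [h])
  have key : llr ρ (P ⊗ₘ κ) =ᵐ[ρ]
      fun q => Real.log ((r q : ℝ) / (p q.1 : ℝ)) - Real.log (k q : ℝ) := by
    filter_upwards [e1, e2, e3, e4] with q a1 a2 a3 a4
    simp only [Pi.mul_apply] at a1
    rw [a2, a3] at a1
    have a5 := congrArg ENNReal.toReal a1
    simp only [ENNReal.toReal_mul, ENNReal.coe_toReal] at a5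
    have hr0 : (r q : ℝ) ≠ 0 := by exact_mod_cast a4
    have hne := hr0
    rw [← a5] at hne
    have hd := left_ne_zero_of_mul hne
    have hp0 := left_ne_zero_of_mul (right_ne_zero_of_mul hne)
    have hk0 := right_ne_zero_of_mul (right_ne_zero_of_mul hne)
    rw [llr, Real.log_div hr0 hp0, ← a5, Real.log_mul hd (mul_ne_zero hp0 hk0),
      Real.log_mul hp0 hk0]
    ring
  have hint : Integrable (llr ρ (P ⊗ₘ κ)) ρ := (integrable_congr key).2 (h3.sub h1)
  rw [klDiv, if_pos ⟨hac, hint⟩, EReal.toReal_coe, integral_congr_ae key, integral_sub h3 h1]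
  ring
end
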